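/- Let Λ₂ = ℤ[t₁^{±1}, t₂^{±1}] be the ring of Laurent polynomials in two variables with integer coefficients. Then the Λ₂-modules Λ₂ ⊕ Λ₂/(2t₂ − t₂²) ⊕ Λ₂/(2t₂ − 1) ⊕ Λ₂ and Λ₂ ⊕ Λ₂/(t₁ + t₂ − t₁t₂) ⊕ Λ₂/(t₁ + t₂ − 1) ⊕ Λ₂ are not isomorphic as Λ₂-modules. -/

import Mathlib

/-- `Λ₂ = ℤ[t₁^{±1}, t₂^{±1}]`, the ring of Laurent polynomials in two variables with
integer coefficients, realized as the additive monoid algebra of `ℤ` over the group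
`Fin 2 →₀ ℤ`. -/
abbrev Lambda2 : Type := AddMonoidAlgebra ℤ (Fin 2 →₀ ℤ)

/-- The variable `tᵢ` of `Λ₂`, the monomial corresponding to the `i`-th standard generator. -/
noncomputable def tvar (i : Fin 2) : Lambda2 :=
  AddMonoidAlgebra.single (Finsupp.single i 1) 1

/-!
The annihilator of the torsion submodule is an isomorphism invariant. For
`R ⊕ R/(a) ⊕ R/(b) ⊕ R`, where `a` and `b` are nonzerodivisors, it is `(a) ∩ (b)`. The four
polynomials at hand take the value `1` at `(1, 1)`, so they are nonzero elements of the domain `Λ₂`.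
An isomorphism would therefore force `t₁ + t₂ - t₁t₂` to divide `(2t₂ - t₂²)(2t₂ - 1)`, but at
`(t₁, t₂) = (1/2, -1)` the former vanishes while the latter takes the value `9`.
-/

section AnnihilatorTorsion

open Submodule
open scoped nonZeroDivisors

theorem annihilator_torsion_eq_of_linearEquiv {R M N : Type*} [CommSemiring R]
    [AddCommMonoid M] [Module R M] [AddCommMonoid N] [Module R N] (e : M ≃ₗ[R] N) :
    (torsion R M).annihilator = (torsion R N).annihilator := by
  have map_torsion : (torsion R M).map (e : M →ₗ[R] N) = torsion R N := by
    ext y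
    simp only [mem_map_equiv, mem_torsion_iff, Submonoid.smul_def, ← map_smul,
      e.symm.map_eq_zero_iff]
  exact ((e.submoduleMap (torsion R M)).trans (LinearEquiv.ofEq _ _ map_torsion)).annihilator_eq

theorem torsion_prod (R M N : Type*) [CommSemiring R]
    [AddCommMonoid M] [Module R M] [AddCommMonoid N] [Module R N] :
    torsion R (M × N) = (torsion R M).prod (torsion R N) := by
  ext ⟨x, y⟩
  simp only [mem_prod, mem_torsion_iff, Prod.smul_mk, Prod.mk_eq_zero]
  constructor
  · rintro ⟨a, hx, hy⟩
    exact ⟨⟨a, hx⟩, a, hy⟩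
  · rintro ⟨⟨a, hx⟩, b, hy⟩
    exact ⟨a * b, by rw [mul_comm, mul_smul, hx, smul_zero], by rw [mul_smul, hy, smul_zero]⟩

theorem annihilator_submodule_prod {R M N : Type*} [CommSemiring R]
    [AddCommMonoid M] [Module R M] [AddCommMonoid N] [Module R N]
    (P : Submodule R M) (Q : Submodule R N) :
    (P.prod Q).annihilator = P.annihilator ⊓ Q.annihilator := by
  ext r
  simp only [Submodule.mem_inf, mem_annihilator, mem_prod, Prod.forall, Prod.smul_mk,
    Prod.mk_eq_zero]
  exact ⟨fun h => ⟨fun x hx => (h x 0 ⟨hx, Q.zero_mem⟩).1, fun y hy => (h 0 y ⟨P.zero_mem, hy⟩).2⟩,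
    fun h x y hxy => ⟨h.1 x hxy.1, h.2 y hxy.2⟩⟩

theorem annihilator_torsion_prod (R M N : Type*) [CommSemiring R]
    [AddCommMonoid M] [Module R M] [AddCommMonoid N] [Module R N] :
    (torsion R (M × N)).annihilator = (torsion R M).annihilator ⊓ (torsion R N).annihilator := by
  rw [torsion_prod, annihilator_submodule_prod]

theorem annihilator_torsion_self (R : Type*) [CommSemiring R] :
    (torsion R R).annihilator = ⊤ := by
  rw [annihilator_eq_top_iff, eq_bot_iff]
  rintro x ⟨a, hax⟩
  exact (mem_nonZeroDivisors_iff.1 a.2).1 x hax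

theorem annihilator_torsion_quotient {R : Type*} [CommRing R] {I : Ideal R} {a : R}
    (haI : a ∈ I) (ha : a ∈ R⁰) : (torsion R (R ⧸ I)).annihilator = I := by
  have torsion_eq_top : torsion R (R ⧸ I) = ⊤ := eq_top_iff.2 fun x _ =>
    ⟨⟨a, ha⟩, Module.mem_annihilator.1 (Ideal.annihilator_quotient.ge haI) x⟩
  rw [torsion_eq_top, annihilator_top, Ideal.annihilator_quotient]

variable {R : Type*} [CommRing R] {a b c d : R}

theorem annihilator_torsion_prod_quotient_prod (ha : a ∈ R⁰) (hb : b ∈ R⁰) :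
    (torsion R (R × (R ⧸ Ideal.span {a}) × (R ⧸ Ideal.span {b}) × R)).annihilator =
      Ideal.span {a} ⊓ Ideal.span {b} := by
  simp only [annihilator_torsion_prod, annihilator_torsion_self, top_inf_eq, inf_top_eq,
    annihilator_torsion_quotient (Ideal.mem_span_singleton_self _) ha,
    annihilator_torsion_quotient (Ideal.mem_span_singleton_self _) hb]

theorem span_inf_span_eq_of_linearEquiv
    (ha : a ∈ R⁰) (hb : b ∈ R⁰) (hc : c ∈ R⁰) (hd : d ∈ R⁰)
    (e : (R × (R ⧸ Ideal.span {a}) × (R ⧸ Ideal.span {b}) × R) ≃ₗ[R]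
      (R × (R ⧸ Ideal.span {c}) × (R ⧸ Ideal.span {d}) × R)) :
    Ideal.span {a} ⊓ Ideal.span {b} = Ideal.span {c} ⊓ Ideal.span {d} := by
  rw [← annihilator_torsion_prod_quotient_prod ha hb, annihilator_torsion_eq_of_linearEquiv e,
    annihilator_torsion_prod_quotient_prod hc hd]

end AnnihilatorTorsion

namespace Lambda2

variable {A : Type*} [CommRing A]

/-- Evaluation of Laurent polynomials at a pair `u` of units of a commutative ring: the ring
homomorphism sending `tᵢ` to `u i`. -/
noncomputable def eval (u : Fin 2 → Aˣ) : Lambda2 →ₐ[ℤ] A :=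
  AddMonoidAlgebra.lift ℤ A (Fin 2 →₀ ℤ) <| (Units.coeHom A).comp <|
    AddMonoidHom.toMultiplicativeLeft <|
      Finsupp.liftAddHom fun i => zmultiplesHom (Additive Aˣ) (Additive.ofMul (u i))

@[simp]
theorem eval_tvar (u : Fin 2 → Aˣ) (i : Fin 2) : eval u (tvar i) = u i := by
  simp [eval, tvar, AddMonoidAlgebra.lift_single]

theorem mem_nonZeroDivisors_of_eval_ne_zero {u : Fin 2 → Aˣ} {p : Lambda2} (h : eval u p ≠ 0) :
    p ∈ nonZeroDivisors Lambda2 :=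
  mem_nonZeroDivisors_of_ne_zero fun hp => h (by rw [hp, map_zero])

theorem not_dvd_of_eval_eq_zero {u : Fin 2 → Aˣ} {p q : Lambda2} (hp : eval u p = 0)
    (hq : eval u q ≠ 0) : ¬ p ∣ q :=
  fun hpq => hq (zero_dvd_iff.1 (hp ▸ map_dvd (eval u) hpq))

end Lambda2

/-- The `Λ₂`-modules `Λ₂ ⊕ Λ₂/(2t₂ - t₂²) ⊕ Λ₂/(2t₂ - 1) ⊕ Λ₂` and
`Λ₂ ⊕ Λ₂/(t₁ + t₂ - t₁t₂) ⊕ Λ₂/(t₁ + t₂ - 1) ⊕ Λ₂` are not isomorphic. -/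
theorem alexander_modules_not_isomorphic_swapped :
    ¬ Nonempty
      ((Lambda2 × (Lambda2 ⧸ Ideal.span {2 * tvar 1 - tvar 1 ^ 2}) ×
          (Lambda2 ⧸ Ideal.span {2 * tvar 1 - 1}) × Lambda2) ≃ₗ[Lambda2]
        (Lambda2 × (Lambda2 ⧸ Ideal.span {tvar 0 + tvar 1 - tvar 0 * tvar 1}) ×
          (Lambda2 ⧸ Ideal.span {tvar 0 + tvar 1 - 1}) × Lambda2)) := by
  rintro ⟨e⟩
  have regular {p : Lambda2} (hp : Lambda2.eval (1 : Fin 2 → ℤˣ) p = 1) :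
      p ∈ nonZeroDivisors Lambda2 :=
    Lambda2.mem_nonZeroDivisors_of_eval_ne_zero (hp.trans_ne one_ne_zero)
  have inf_eq_inf := span_inf_span_eq_of_linearEquiv
    (regular (by simp [map_ofNat])) (regular (by simp [map_ofNat]))
    (regular (by simp)) (regular (by simp)) e
  have divisor_dvd : tvar 0 + tvar 1 - tvar 0 * tvar 1 ∣
      (2 * tvar 1 - tvar 1 ^ 2) * (2 * tvar 1 - 1) :=
    Ideal.mem_span_singleton.1 (inf_eq_inf.le (Ideal.mul_le_inf (Ideal.mul_mem_mul
      (Ideal.mem_span_singleton_self _) (Ideal.mem_span_singleton_self _)))).1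
  let u : Fin 2 → ℚˣ := ![Units.mk0 (1 / 2) (by norm_num), -1]
  have eval_divisor : Lambda2.eval u (tvar 0 + tvar 1 - tvar 0 * tvar 1) = 0 := by
    norm_num [u]
  have eval_product :
      Lambda2.eval u ((2 * tvar 1 - tvar 1 ^ 2) * (2 * tvar 1 - 1)) = 9 := by
    norm_num [u, map_ofNat]
  exact Lambda2.not_dvd_of_eval_eq_zero eval_divisor
    (eval_product.trans_ne (by norm_num)) divisor_dvd
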